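/- Let n ≥ 2 and b ∈ ℝ. Consider the curve-germ in ℝ^{2n} (coordinates (p₁,q₁,p₂,q₂,…,pₙ,qₙ), all unlisted coordinates equal to 0) f(t) = (t⁴, (1/3)t⁹ + (b/2)t¹⁰, t³, 0, …, 0) (the class E₆³ of the planar singularity E₆). Then Lt(f) = 10. -/

import Mathlib

noncomputable section

/-- The order of vanishing at `0` of a function `h : ℝ → ℝ`: the least `k ≥ 1` such that
the `k`-th derivative of `h` at `0` is nonzero, and `∞` if all derivatives vanish at `0`. -/
def vanishOrder (h : ℝ → ℝ) : ℕ∞ :=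
  sInf {k : ℕ∞ | ∃ m : ℕ, k = m ∧ 1 ≤ m ∧ iteratedDeriv m h 0 ≠ 0}

/-- The standard symplectic form `ω = ∑ dpᵢ ∧ dqᵢ` on `ℝ^{2n}`, where the coordinates are
ordered as `(p₁, q₁, …, pₙ, qₙ)` (so `pᵢ` has index `2(i-1)` and `qᵢ` has index `2(i-1)+1`). -/
def stdSymp (n : ℕ) (u v : Fin (2 * n) → ℝ) : ℝ :=
  ∑ i : Fin n,
    (u ⟨2 * i.val, by have := i.isLt; omega⟩ * v ⟨2 * i.val + 1, by have := i.isLt; omega⟩ -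
     u ⟨2 * i.val + 1, by have := i.isLt; omega⟩ * v ⟨2 * i.val, by have := i.isLt; omega⟩)

/-- A germ at `0` of a smooth Lagrangian submanifold of `(ℝ^{2n}, ω)`, given by `n` smooth
functions `H₁, …, Hₙ` vanishing at `0`, whose differentials are linearly independent at the
points of `{H₁ = ⋯ = Hₙ = 0}` near `0`, and such that `ω` vanishes on `ker DH(x)` at every
such point. -/
structure LagrangianGerm (n : ℕ) : Type where
  H : Fin n → (Fin (2 * n) → ℝ) → ℝ
  smooth : ∀ i, ContDiff ℝ (⊤ : ℕ∞) (H i)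
  zero_at_zero : ∀ i, H i 0 = 0
  lagrangian : ∃ U : Set (Fin (2 * n) → ℝ), IsOpen U ∧ 0 ∈ U ∧
    ∀ x ∈ U, (∀ i, H i x = 0) →
      LinearIndependent ℝ (fun i => fderiv ℝ (H i) x) ∧
      ∀ u v : Fin (2 * n) → ℝ, (∀ i, fderiv ℝ (H i) x u = 0) →
        (∀ i, fderiv ℝ (H i) x v = 0) → stdSymp n u v = 0

/-- The tangency order `t(f, L)` of a curve `f` to a Lagrangian submanifold-germ `L`:
the minimum over `i` of the order of vanishing at `0` of `Hᵢ ∘ f`. -/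
def tOrd {n : ℕ} (f : ℝ → Fin (2 * n) → ℝ) (L : LagrangianGerm n) : ℕ∞ :=
  ⨅ i : Fin n, vanishOrder (fun t => L.H i (f t))

/-- The Lagrangian tangency order `Lt(f)` of a curve `f`. -/
def Lt1 {n : ℕ} (f : ℝ → Fin (2 * n) → ℝ) : ℕ∞ :=
  ⨆ L : LagrangianGerm n, tOrd f L

/-- The Lagrangian tangency order `Lt(f, g)` of a multi-germ of two curves. -/
def Lt2 {n : ℕ} (f g : ℝ → Fin (2 * n) → ℝ) : ℕ∞ :=
  ⨆ L : LagrangianGerm n, min (tOrd f L) (tOrd g L)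

/-- The Lagrangian tangency order `Lt(f, g, h)` of a multi-germ of three curves. -/
def Lt3 {n : ℕ} (f g h : ℝ → Fin (2 * n) → ℝ) : ℕ∞ :=
  ⨆ L : LagrangianGerm n, min (tOrd f L) (min (tOrd g L) (tOrd h L))

/-!
The curve is the image of the planar curve `t ↦ (t⁴, t³)` in the smooth surface
`M(x, y) = (x, y³/3 + (b/2) x y², y, 0, …, 0)`. If `h(t⁴, t³) = o(t¹⁰)`, then expanding `h` in
powers of `x` along the axis `x = 0` produces monomials `t^(4i + 3j)` with no coincidence of
exponents before `t¹²`, so `h = o(y³)` and `dh = o(y²)` on that axis. Apply this to the pullbacks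
`Hᵢ ∘ M` for a Lagrangian germ `L = {H = 0}`: if the tangency order exceeded `10`, the tangent
vectors `∂ₓM` and `∂ᵧM` along `x = 0` would be within `o(y²)` of a pair of vectors tangent to `L`
at a common point, so `ω(∂ₓM, ∂ᵧM) = o(y²)`. But `ω(∂ₓM, ∂ᵧM) = y²` there. Order `10` is attained
by the Lagrangian germ with generating function `p₁p₂³/3`.
-/

open Asymptotics Filter Topology
open scoped ContDiff

section Taylor

open Polynomial

theorem not_pow_isLittleO_pow_self (k : ℕ) : ¬(fun t : ℝ => t ^ k) =o[𝓝 0] fun t => t ^ k := by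
  have ne_zero : ∃ᶠ t : ℝ in 𝓝 0, t ≠ 0 :=
    (eventually_mem_nhdsWithin (s := {0}ᶜ)).frequently.filter_mono nhdsWithin_le_nhds
  exact isLittleO_irrefl (ne_zero.mono fun t ht => pow_ne_zero k ht)

theorem pow_isBigO_pow_of_le {m k : ℕ} (hmk : m ≤ k) :
    (fun t : ℝ => t ^ k) =O[𝓝 0] fun t => t ^ m := by
  rcases hmk.eq_or_lt with rfl | hlt
  · exact isBigO_refl _ _
  · exact (isLittleO_pow_pow hlt).isBigO

theorem coeff_eq_zero_of_eval_isLittleO_pow {p : ℝ[X]} {m : ℕ}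
    (hp : (fun t => p.eval t) =o[𝓝 0] fun t : ℝ => t ^ m) {k : ℕ} (hk : k ≤ m) :
    p.coeff k = 0 := by
  rcases eq_or_ne p 0 with rfl | hp0
  · exact coeff_zero k
  obtain ⟨q, hpq, hq⟩ := exists_eq_pow_rootMultiplicity_mul_and_not_dvd p hp0 0
  set r := p.rootMultiplicity 0
  rw [C_0, sub_zero] at hpq hq
  rw [X_dvd_iff, coeff_zero_eq_eval_zero] at hq
  suffices hmr : m < r from X_pow_dvd_iff.1 (Dvd.intro q hpq.symm) k (hk.trans_lt hmr)
  by_contra! hrm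
  have one_isBigO : (fun _ : ℝ => (1 : ℝ)) =O[𝓝 0] fun t => q.eval t :=
    (isBigO_const_const 1 hq _).trans
      ((isEquivalent_const_iff_tendsto hq).2 q.continuous.continuousAt).isBigO_symm
  have pow_isBigO : (fun t : ℝ => t ^ r) =O[𝓝 0] fun t => p.eval t := by
    simpa [hpq] using (isBigO_refl (fun t : ℝ => t ^ r) (𝓝 0)).mul one_isBigO
  exact not_pow_isLittleO_pow_self r
    ((pow_isBigO.trans_isLittleO hp).trans_isBigO (pow_isBigO_pow_of_le hrm))

/-- The Taylor polynomial of degree `m` at `0`, as an element of `ℝ[X]` so that its coefficients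
can be compared. -/
def taylorPolynomial (g : ℝ → ℝ) (m : ℕ) : ℝ[X] :=
  ∑ k ∈ Finset.range (m + 1), monomial k ((k.factorial : ℝ)⁻¹ * iteratedDeriv k g 0)

theorem coeff_taylorPolynomial {m k : ℕ} (g : ℝ → ℝ) (hk : k ≤ m) :
    (taylorPolynomial g m).coeff k = (k.factorial : ℝ)⁻¹ * iteratedDeriv k g 0 := by
  simp [taylorPolynomial, coeff_monomial, hk]

theorem coeff_taylorPolynomial_eq_zero_iff {m k : ℕ} {g : ℝ → ℝ} (hk : k ≤ m) :
    (taylorPolynomial g m).coeff k = 0 ↔ iteratedDeriv k g 0 = 0 := by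
  rw [coeff_taylorPolynomial g hk]
  exact mul_eq_zero_iff_left (by positivity)

theorem sub_eval_taylorPolynomial_isLittleO {g : ℝ → ℝ} {m : ℕ} (hg : ContDiff ℝ m g) :
    (fun y => g y - (taylorPolynomial g m).eval y) =o[𝓝 0] fun y : ℝ => y ^ m := by
  simpa [taylorPolynomial, eval_finsetSum, taylor_within_apply, mul_right_comm]
    using taylor_isLittleO_univ (x₀ := 0) hg

theorem pow_mul_comp_pow_sub_eval_isLittleO {g : ℝ → ℝ} {m p q k : ℕ} (hg : ContDiff ℝ m g)
    (hp : p ≠ 0) (hk : k ≤ q + p * m) :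
    (fun t => t ^ q * g (t ^ p) - (X ^ q * expand ℝ p (taylorPolynomial g m)).eval t)
      =o[𝓝 0] fun t : ℝ => t ^ k := by
  have pow_tendsto : Tendsto (fun t : ℝ => t ^ p) (𝓝 0) (𝓝 0) :=
    (continuous_pow p).tendsto' 0 0 (zero_pow hp)
  have remainder := (sub_eval_taylorPolynomial_isLittleO hg).comp_tendsto pow_tendsto
  refine ((isBigO_refl (fun t : ℝ => t ^ q) (𝓝 0)).mul_isLittleO remainder).trans_isBigO
    (pow_isBigO_pow_of_le hk |>.congr_left fun t => ?_) |>.congr_left fun t => ?_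
  · simp only [Function.comp_apply, pow_add, pow_mul]
  · simp only [Function.comp_apply, eval_mul, eval_pow, eval_X, expand_eval, mul_sub]

theorem isLittleO_pow_iff_iteratedDeriv_eq_zero {g : ℝ → ℝ} {m : ℕ} (hg : ContDiff ℝ m g) :
    g =o[𝓝 0] (fun y : ℝ => y ^ m) ↔ ∀ k ≤ m, iteratedDeriv k g 0 = 0 := by
  have taylor := sub_eval_taylorPolynomial_isLittleO hg
  constructor
  · intro hg_small k hk
    have coeff_zero := coeff_eq_zero_of_eval_isLittleO_pow
      (by simpa using hg_small.sub taylor) hk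
    exact (coeff_taylorPolynomial_eq_zero_iff hk).1 coeff_zero
  · intro hderiv
    have taylor_zero : taylorPolynomial g m = 0 := Finset.sum_eq_zero fun k hk => by
      rw [hderiv k (Finset.mem_range_succ_iff.1 hk), mul_zero, monomial_zero_right]
    simpa [taylor_zero] using taylor

theorem deriv_isLittleO_pow {g : ℝ → ℝ} {m : ℕ} (hg : ContDiff ℝ (m + 1) g)
    (hg_small : g =o[𝓝 0] fun y : ℝ => y ^ (m + 1)) :
    deriv g =o[𝓝 0] fun y : ℝ => y ^ m := by
  have hderiv := (isLittleO_pow_iff_iteratedDeriv_eq_zero (m := m + 1) hg).1 hg_small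
  refine (isLittleO_pow_iff_iteratedDeriv_eq_zero (contDiff_succ_iff_deriv.1 hg).2.2).2 ?_
  intro k hk
  rw [← iteratedDeriv_succ']
  exact hderiv (k + 1) (Nat.succ_le_succ hk)

variable {E F : Type*} [NormedAddCommGroup E] [NormedSpace ℝ E]
  [NormedAddCommGroup F] [NormedSpace ℝ F] [CompleteSpace F]

theorem norm_sub_sum_iteratedFDeriv_le {f : E → F} {n : ℕ} {x y : E} {C : ℝ}
    (hf : ∀ t ∈ Set.Icc (0 : ℝ) 1, ContDiffAt ℝ (n + 1) f (x + t • y))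
    (hC : ∀ t ∈ Set.Icc (0 : ℝ) 1, ‖iteratedFDeriv ℝ (n + 1) f (x + t • y)‖ ≤ C) :
    ‖f (x + y) - ∑ k ∈ Finset.range (n + 1),
        (k.factorial : ℝ)⁻¹ • iteratedFDeriv ℝ k f x fun _ => y‖
      ≤ (n.factorial : ℝ)⁻¹ * (C * ‖y‖ ^ (n + 1)) := by
  rw [map_add_eq_sum_add_integral_iteratedFDeriv hf, add_sub_cancel_left, norm_smul,
    Real.norm_of_nonneg (by positivity)]
  gcongr
  refine (intervalIntegral.norm_integral_le_of_norm_le_const (C := C * ‖y‖ ^ (n + 1))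
    fun t ht => ?_).trans (by simp)
  rw [Set.uIoc_of_le zero_le_one] at ht
  have weight_le_one : ‖(1 - t) ^ n‖ ≤ 1 := by
    rw [norm_pow, Real.norm_of_nonneg (sub_nonneg.2 ht.2)]
    exact pow_le_one₀ (sub_nonneg.2 ht.2) (sub_le_self 1 ht.1.le)
  have deriv_le : ‖iteratedFDeriv ℝ (n + 1) f (x + t • y) fun _ => y‖ ≤ C * ‖y‖ ^ (n + 1) := by
    refine (ContinuousMultilinearMap.le_opNorm _ _).trans ?_
    rw [Finset.prod_const, Finset.card_univ, Fintype.card_fin]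
    gcongr
    exact hC t (Set.Ioc_subset_Icc_self ht)
  rw [norm_smul]
  exact (mul_le_mul weight_le_one deriv_le (norm_nonneg _) zero_le_one).trans_eq (one_mul _)

/-- Unlike Peano's form, this bound is uniform in the base point of the expansion. -/
theorem sub_sum_iteratedFDeriv_isBigO {f : E → F} {n : ℕ} (hf : ContDiff ℝ (n + 1) f) (a : E) :
    (fun z : E × E => f (z.1 + z.2) - ∑ k ∈ Finset.range (n + 1),
        (k.factorial : ℝ)⁻¹ • iteratedFDeriv ℝ k f z.1 fun _ => z.2)
      =O[𝓝 (a, 0)] fun z => ‖z.2‖ ^ (n + 1) := by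
  have hcont : Continuous (iteratedFDeriv ℝ (n + 1) f) := hf.continuous_iteratedFDeriv'
  set C := ‖iteratedFDeriv ℝ (n + 1) f a‖ + 1
  obtain ⟨r, hr, hball⟩ := Metric.eventually_nhds_iff_ball.1
    (hcont.norm.continuousAt.eventually (gt_mem_nhds (lt_add_one ‖iteratedFDeriv ℝ (n + 1) f a‖)))
  have base_mem : ∀ᶠ z : E × E in 𝓝 (a, 0), z.1 ∈ Metric.ball a r :=
    continuous_fst.continuousAt.eventually (Metric.ball_mem_nhds a hr)
  have end_mem : ∀ᶠ z : E × E in 𝓝 (a, 0), z.1 + z.2 ∈ Metric.ball a r :=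
    continuous_add.continuousAt.eventually (Metric.isOpen_ball.mem_nhds (by simpa))
  refine IsBigO.of_bound ((n.factorial : ℝ)⁻¹ * C) ?_
  filter_upwards [base_mem, end_mem] with z hz₁ hz₂
  rw [Real.norm_of_nonneg (by positivity), mul_assoc]
  exact norm_sub_sum_iteratedFDeriv_le (fun t _ => hf.contDiffAt) fun t ht =>
    (hball _ ((convex_ball a r).add_smul_mem hz₁ hz₂ ht)).le

end Taylor

section Cusp

open Polynomial

/-- The exponents `3j`, `3j + 4` and `8` are pairwise distinct up to `10`, so no cancellation
between the three summands is possible there. -/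
theorem isLittleO_of_cuspidal_sum_isLittleO {a b c : ℝ → ℝ}
    (ha : ContDiff ℝ 4 a) (hb : ContDiff ℝ 2 b) (hc : ContDiff ℝ 1 c)
    (hsum : (fun t : ℝ => a (t ^ 3) + t ^ 4 * b (t ^ 3) + t ^ 8 * c (t ^ 3))
      =o[𝓝 0] fun t => t ^ 10) :
    a =o[𝓝 0] (fun y : ℝ => y ^ 3) ∧ b =o[𝓝 0] fun y : ℝ => y ^ 2 := by
  set A := taylorPolynomial a 4
  set B := taylorPolynomial b 2
  set C := taylorPolynomial c 1
  set P := X ^ 0 * expand ℝ 3 A + X ^ 4 * expand ℝ 3 B + X ^ 8 * expand ℝ 3 C with hP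
  have eval_small : (fun t => P.eval t) =o[𝓝 0] fun t : ℝ => t ^ 10 := by
    have remainder_a := pow_mul_comp_pow_sub_eval_isLittleO (p := 3) (q := 0) (k := 10)
      (m := 4) ha (by norm_num) (by norm_num)
    have remainder_b := pow_mul_comp_pow_sub_eval_isLittleO (p := 3) (q := 4) (k := 10)
      (m := 2) hb (by norm_num) (by norm_num)
    have remainder_c := pow_mul_comp_pow_sub_eval_isLittleO (p := 3) (q := 8) (k := 10)
      (m := 1) hc (by norm_num) (by norm_num)
    refine (hsum.sub ((remainder_a.add remainder_b).add remainder_c)).congr_left fun t => ?_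
    rw [hP, eval_add, eval_add]
    ring
  have coeff_P {k : ℕ} (hk : k ≤ 10) : P.coeff k = 0 :=
    coeff_eq_zero_of_eval_isLittleO_pow eval_small hk
  have coeff_A : ∀ j ≤ 3, A.coeff j = 0 := fun j hj => by
    have coeff_P_eq_zero := coeff_P (k := 3 * j) (by lia)
    interval_cases j <;> simpa [hP, coeff_X_pow_mul', coeff_expand] using coeff_P_eq_zero
  have coeff_B : ∀ j ≤ 2, B.coeff j = 0 := fun j hj => by
    have coeff_P_eq_zero := coeff_P (k := 3 * j + 4) (by lia)
    interval_cases j <;> simpa [hP, coeff_X_pow_mul', coeff_expand] using coeff_P_eq_zero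
  exact ⟨(isLittleO_pow_iff_iteratedDeriv_eq_zero (m := 3) (ha.of_le (by norm_num))).2
      fun j hj => (coeff_taylorPolynomial_eq_zero_iff (by lia)).1 (coeff_A j hj),
    (isLittleO_pow_iff_iteratedDeriv_eq_zero (m := 2) hb).2
      fun j hj => (coeff_taylorPolynomial_eq_zero_iff hj).1 (coeff_B j hj)⟩

variable {E F : Type*} [NormedAddCommGroup E] [NormedSpace ℝ E]
  [NormedAddCommGroup F] [NormedSpace ℝ F]

theorem iteratedFDeriv_apply_const_smul (h : E → F) (k : ℕ) (z v : E) (x : ℝ) :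
    (iteratedFDeriv ℝ k h z fun _ => x • v) = x ^ k • iteratedFDeriv ℝ k h z fun _ => v := by
  simpa using (iteratedFDeriv ℝ k h z).map_smul_univ (fun _ => x) fun _ => v

theorem contDiff_iteratedFDeriv_apply {h : E → F} {m N : WithTop ℕ∞} {k : ℕ}
    (hh : ContDiff ℝ N h) (hmk : m + k ≤ N) (v : Fin k → E) :
    ContDiff ℝ m fun z => iteratedFDeriv ℝ k h z v :=
  (ContinuousMultilinearMap.apply ℝ (fun _ => E) F v).contDiff.comp (hh.iteratedFDeriv_right hmk)

variable {h : ℝ × ℝ → ℝ}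

theorem cusp_expansion_isLittleO (hh : ContDiff ℝ 4 h)
    (hcurve : (fun t : ℝ => h (t ^ 4, t ^ 3)) =o[𝓝 0] fun t => t ^ 10) :
    (fun t : ℝ => h (0, t ^ 3) + t ^ 4 * fderiv ℝ h (0, t ^ 3) (1, 0)
      + t ^ 8 * (2⁻¹ * iteratedFDeriv ℝ 2 h (0, t ^ 3) fun _ => (1, 0)))
      =o[𝓝 0] fun t => t ^ 10 := by
  set e : ℝ × ℝ := (1, 0) with he
  have base_tendsto : Tendsto (fun t : ℝ => (((0 : ℝ), t ^ 3), t ^ 4 • e)) (𝓝 0) (𝓝 (0, 0)) :=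
    Continuous.tendsto' (by fun_prop) _ _ (by simp)
  have remainder := (sub_sum_iteratedFDeriv_isBigO (n := 2)
    (hh.of_le (by norm_num)) 0).comp_tendsto base_tendsto
  have remainder_small : (fun t : ℝ => ‖t ^ 4 • e‖ ^ 3) =o[𝓝 0] fun t => t ^ 10 := by
    refine (isLittleO_pow_pow (show 10 < 12 by norm_num)).norm_left.congr_left fun t => ?_
    simp [he, ← pow_mul]
  refine (hcurve.sub (remainder.trans_isLittleO remainder_small)).congr_left fun t => ?_
  have curve_eq : ((0 : ℝ), t ^ 3) + t ^ 4 • e = (t ^ 4, t ^ 3) := by simp [he]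
  simp only [Function.comp_apply, curve_eq, Finset.sum_range_succ, Finset.sum_range_zero,
    iteratedFDeriv_apply_const_smul, iteratedFDeriv_one_apply, iteratedFDeriv_zero_apply,
    map_smul, Nat.factorial, smul_eq_mul]
  push_cast
  ring

theorem isLittleO_of_comp_cusp_isLittleO (hh : ContDiff ℝ 4 h)
    (hcurve : (fun t : ℝ => h (t ^ 4, t ^ 3)) =o[𝓝 0] fun t => t ^ 10) :
    (fun y => h (0, y)) =o[𝓝 0] (fun y : ℝ => y ^ 3) ∧
      (fun y => fderiv ℝ h (0, y) (1, 0)) =o[𝓝 0] (fun y : ℝ => y ^ 2) ∧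
      (fun y => fderiv ℝ h (0, y) (0, 1)) =o[𝓝 0] fun y : ℝ => y ^ 2 := by
  have axis_smooth : ContDiff ℝ 4 fun y : ℝ => ((0 : ℝ), y) := contDiff_prodMk_right 0
  have value_smooth : ContDiff ℝ 4 fun y => h (0, y) := hh.comp axis_smooth
  have fst_smooth : ContDiff ℝ 2 fun y : ℝ => fderiv ℝ h (0, y) (1, 0) :=
    ((hh.fderiv_right (by norm_num)).comp (axis_smooth.of_le (by norm_num))).clm_apply
      contDiff_const
  have snd_smooth :
      ContDiff ℝ 1 fun y : ℝ => 2⁻¹ * iteratedFDeriv ℝ 2 h (0, y) fun _ => (1, 0) :=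
    contDiff_const.mul ((contDiff_iteratedFDeriv_apply hh (by norm_num) _).comp
      (axis_smooth.of_le (by norm_num)))
  obtain ⟨value_small, fst_small⟩ := isLittleO_of_cuspidal_sum_isLittleO
    value_smooth fst_smooth snd_smooth (cusp_expansion_isLittleO hh hcurve)
  have deriv_value (y : ℝ) : deriv (fun y => h (0, y)) y = fderiv ℝ h (0, y) (0, 1) :=
    ((hh.differentiable (by norm_num) (0, y)).hasFDerivAt.comp_hasDerivAt y
      ((hasDerivAt_const y 0).prodMk (hasDerivAt_id y))).deriv
  exact ⟨value_small, fst_small, (deriv_isLittleO_pow (m := 2)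
    (value_smooth.of_le (by norm_num)) value_small).congr_left deriv_value⟩

end Cusp

section MetricRegularity

variable {ι E F : Type*} [NormedAddCommGroup E] [NormedSpace ℝ E] [CompleteSpace E]
  [NormedAddCommGroup F] [NormedSpace ℝ F]

theorem exists_eq_norm_sub_le_of_approximatesLinearOn {Φ : E → F} {A : E →L[ℝ] F} {s : Set E}
    (R : A.NonlinearRightInverse) (hR : 0 < R.nnnorm)
    (hΦ : ApproximatesLinearOn Φ A s (R.nnnorm⁻¹ / 2)) {x : E} {y : F}
    (hs : Metric.closedBall x (2 * R.nnnorm * ‖y - Φ x‖) ⊆ s) :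
    ∃ z, Φ z = y ∧ ‖z - x‖ ≤ 2 * R.nnnorm * ‖y - Φ x‖ := by
  have radius : ((R.nnnorm : ℝ)⁻¹ - (R.nnnorm⁻¹ / 2 : NNReal)) * (2 * R.nnnorm * ‖y - Φ x‖)
      = ‖y - Φ x‖ := by
    push_cast
    field_simp
    norm_num
  obtain ⟨z, hz, hΦz⟩ := hΦ.surjOn_closedBall_of_nonlinearRightInverse R (by positivity) hs
    (show y ∈ _ by rw [radius, mem_closedBall_iff_norm])
  exact ⟨z, hΦz, mem_closedBall_iff_norm.1 hz⟩

variable [CompleteSpace F]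

theorem exists_zero_sub_isBigO_of_hasStrictFDerivAt {Φ : E → F} {A : E →L[ℝ] F} {a : E}
    {l : Filter ι} {c : ι → E} (hΦ : HasStrictFDerivAt Φ A a) (hA : A.range = ⊤)
    (hc : Tendsto c l (𝓝 a)) (hΦc : Tendsto (fun s => Φ (c s)) l (𝓝 0)) :
    ∃ z : ι → E, (∀ᶠ s in l, Φ (z s) = 0) ∧ (fun s => z s - c s) =O[l] fun s => Φ (c s) := by
  set R := A.nonlinearRightInverseOfSurjective hA
  have hR : 0 < R.nnnorm := A.nonlinearRightInverseOfSurjective_nnnorm_pos hA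
  obtain ⟨V, hV, hΦV⟩ := hΦ.approximates_deriv_on_nhds (c := R.nnnorm⁻¹ / 2)
    (Or.inr (by positivity))
  obtain ⟨r, hr, hrV⟩ := Metric.nhds_basis_closedBall.mem_iff.1 hV
  have reach_tendsto :
      Tendsto (fun s => 2 * R.nnnorm * ‖0 - Φ (c s)‖ + dist (c s) a) l (𝓝 0) := by
    simpa using (hΦc.norm.const_mul (2 * (R.nnnorm : ℝ))).add (tendsto_iff_dist_tendsto_zero.1 hc)
  have exists_zero : ∀ᶠ s in l, ∃ z, Φ z = 0 ∧ ‖z - c s‖ ≤ 2 * R.nnnorm * ‖Φ (c s)‖ := by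
    filter_upwards [reach_tendsto.eventually (ge_mem_nhds hr)] with s hs
    simpa using exists_eq_norm_sub_le_of_approximatesLinearOn R hR hΦV (y := 0)
      ((Metric.closedBall_subset_closedBall' hs).trans hrV)
  choose! z hz_of_exists using
    fun s (hs : ∃ z, Φ z = 0 ∧ ‖z - c s‖ ≤ 2 * R.nnnorm * ‖Φ (c s)‖) => hs
  have hz := exists_zero.mono hz_of_exists
  exact ⟨z, hz.mono fun s hs => hs.1, IsBigO.of_bound _ (hz.mono fun s hs => hs.2)⟩

end MetricRegularity

section TangentPair

variable {ι E F : Type*} [NormedAddCommGroup E] [NormedSpace ℝ E]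
  [NormedAddCommGroup F] [NormedSpace ℝ F]

/-- The map induced by `G` on pairs of tangent vectors with a common base point. Its zeros are the
pairs of vectors tangent to the level set `G = 0` at one of its points. -/
def tangentPairMap (G : E → F) (w : E × E × E) : F × F × F :=
  (G w.1, fderiv ℝ G w.1 w.2.1, fderiv ℝ G w.1 w.2.2)

theorem contDiffAt_tangentPairMap {G : E → F} {w : E × E × E} {m : WithTop ℕ∞}
    (hG : ContDiffAt ℝ (m + 1) G w.1) : ContDiffAt ℝ m (tangentPairMap G) w := by
  have hdG : ContDiffAt ℝ m (fun w : E × E × E => fderiv ℝ G w.1) w :=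
    (hG.fderiv_right le_rfl).comp w contDiffAt_fst
  exact ((hG.of_le le_self_add).comp w contDiffAt_fst).prodMk
    ((hdG.clm_apply contDiffAt_snd.fst).prodMk (hdG.clm_apply contDiffAt_snd.snd))

/-- The derivative is block triangular, with `fderiv ℝ G a` as each diagonal block. -/
theorem range_fderiv_tangentPairMap {G : E → F} {a u v : E} (hG : ContDiffAt ℝ 2 G a)
    (hA : (fderiv ℝ G a).range = ⊤) : (fderiv ℝ (tangentPairMap G) (a, u, v)).range = ⊤ := by
  have hdG : HasFDerivAt (fun w : E × E × E => fderiv ℝ G w.1) _ (a, u, v) :=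
    ((hG.fderiv_right (m := 1) le_rfl).differentiableAt one_ne_zero).hasFDerivAt.comp (a, u, v)
      hasFDerivAt_fst
  have hΦ : HasFDerivAt (tangentPairMap G) _ (a, u, v) :=
    ((hG.differentiableAt two_ne_zero).hasFDerivAt.comp (a, u, v) hasFDerivAt_fst).prodMk
      ((hdG.clm_apply hasFDerivAt_snd.fst).prodMk (hdG.clm_apply hasFDerivAt_snd.snd))
  rw [hΦ.fderiv, LinearMap.range_eq_top]
  rintro ⟨y₀, y₁, y₂⟩
  rw [LinearMap.range_eq_top] at hA
  obtain ⟨ξ, hξ⟩ := hA y₀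
  obtain ⟨ζ, hζ⟩ := hA (y₁ - fderiv ℝ (fderiv ℝ G) a ξ u)
  obtain ⟨χ, hχ⟩ := hA (y₂ - fderiv ℝ (fderiv ℝ G) a ξ v)
  exact ⟨(ξ, ζ, χ), by simp_all⟩

theorem exists_tangentPair_sub_isLittleO [CompleteSpace E] [CompleteSpace F] {G : E → F}
    {a u v : E} (hG : ContDiffAt ℝ 2 G a) (hA : (fderiv ℝ G a).range = ⊤)
    {l : Filter ι} {w : ι → E × E × E} {g : ι → ℝ} (hg : Tendsto g l (𝓝 0))
    (hw : Tendsto w l (𝓝 (a, u, v))) (hGw : (fun s => tangentPairMap G (w s)) =o[l] g) :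
    ∃ z : ι → E × E × E, (∀ᶠ s in l, tangentPairMap G (z s) = 0) ∧
      Tendsto z l (𝓝 (a, u, v)) ∧ (fun s => z s - w s) =o[l] g := by
  have hΦ : HasStrictFDerivAt (tangentPairMap G) _ (a, u, v) :=
    (contDiffAt_tangentPairMap (m := 1) (w := (a, u, v)) hG).hasStrictFDerivAt one_ne_zero
  obtain ⟨z, hz, hzw⟩ := exists_zero_sub_isBigO_of_hasStrictFDerivAt hΦ
    (range_fderiv_tangentPairMap hG hA) hw (hGw.trans_tendsto hg)
  have hzw_small := hzw.trans_isLittleO hGw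
  exact ⟨z, hz, by simpa using (hzw_small.trans_tendsto hg).add hw, hzw_small⟩

end TangentPair

theorem linearMap_pi_apply_eq_sum_mul {ι : Type*} [Fintype ι] [DecidableEq ι]
    (ψ : (ι → ℝ) →ₗ[ℝ] ℝ) (x : ι → ℝ) : ψ x = ∑ i, x i * ψ (Pi.single i 1) := by
  simpa using congrArg ψ ((Pi.basisFun ℝ ι).sum_repr x).symm

theorem range_pi_eq_top_of_linearIndependent {ι E : Type*} [Finite ι] [NormedAddCommGroup E]
    [NormedSpace ℝ E] {φ : ι → E →L[ℝ] ℝ} (hφ : LinearIndependent ℝ φ) :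
    (ContinuousLinearMap.pi φ).range = ⊤ := by
  classical
  have := Fintype.ofFinite ι
  rw [LinearMap.range_eq_top, ← LinearMap.dualMap_injective_iff, injective_iff_map_eq_zero]
  intro ψ hψ
  have combination_zero : ∑ i, ψ (Pi.single i 1) • φ i = 0 := by
    ext x
    simpa [mul_comm] using
      (linearMap_pi_apply_eq_sum_mul ψ fun i => φ i x).symm.trans (LinearMap.congr_fun hψ x)
  exact (Pi.basisFun ℝ ι).ext fun i => by
    simpa using Fintype.linearIndependent_iff.1 hφ _ combination_zero i

theorem contDiff_stdSymp (n : ℕ) {m : WithTop ℕ∞} :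
    ContDiff ℝ m fun w : (Fin (2 * n) → ℝ) × (Fin (2 * n) → ℝ) => stdSymp n w.1 w.2 := by
  unfold stdSymp
  fun_prop

namespace LagrangianGerm

variable {n : ℕ} (L : LagrangianGerm n)

theorem contDiff_pi_H : ContDiff ℝ ∞ fun x i => L.H i x := contDiff_pi.2 L.smooth

theorem fderiv_pi_H (x : Fin (2 * n) → ℝ) :
    fderiv ℝ (fun x i => L.H i x) x = ContinuousLinearMap.pi fun i => fderiv ℝ (L.H i) x :=
  fderiv_pi fun i => (L.smooth i).differentiable (by simp) x

theorem range_fderiv_pi_H : (fderiv ℝ (fun x i => L.H i x) 0).range = ⊤ := by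
  obtain ⟨U, -, h0U, hU⟩ := L.lagrangian
  rw [L.fderiv_pi_H]
  exact range_pi_eq_top_of_linearIndependent (hU 0 h0U L.zero_at_zero).1

theorem eventually_stdSymp_eq_zero {u v : Fin (2 * n) → ℝ} :
    ∀ᶠ w in 𝓝 ((0 : Fin (2 * n) → ℝ), u, v), tangentPairMap (fun x i => L.H i x) w = 0 →
      stdSymp n w.2.1 w.2.2 = 0 := by
  obtain ⟨U, hU_open, h0U, hU⟩ := L.lagrangian
  filter_upwards [continuous_fst.continuousAt.eventually (hU_open.mem_nhds h0U)] with w hwU hw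
  simp only [tangentPairMap, L.fderiv_pi_H, Prod.mk_eq_zero, funext_iff, Pi.zero_apply,
    ContinuousLinearMap.pi_apply] at hw
  exact (hU w.1 hwU hw.1).2 _ _ hw.2.1 hw.2.2

theorem stdSymp_isLittleO {ι : Type*} {l : Filter ι} {g : ι → ℝ}
    (hg : Tendsto g l (𝓝 0)) {c u v : ι → Fin (2 * n) → ℝ} {u₀ v₀ : Fin (2 * n) → ℝ}
    (hc : Tendsto c l (𝓝 0)) (hu : Tendsto u l (𝓝 u₀)) (hv : Tendsto v l (𝓝 v₀))
    (hHc : ∀ i, (fun s => L.H i (c s)) =o[l] g)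
    (hHu : ∀ i, (fun s => fderiv ℝ (L.H i) (c s) (u s)) =o[l] g)
    (hHv : ∀ i, (fun s => fderiv ℝ (L.H i) (c s) (v s)) =o[l] g) :
    (fun s => stdSymp n (u s) (v s)) =o[l] g := by
  set G : (Fin (2 * n) → ℝ) → Fin n → ℝ := fun x i => L.H i x with hG
  have hw : Tendsto (fun s => (c s, u s, v s)) l (𝓝 (0, u₀, v₀)) :=
    hc.prodMk_nhds (hu.prodMk_nhds hv)
  have small : (fun s => tangentPairMap G (c s, u s, v s)) =o[l] g := by
    simp only [tangentPairMap, hG, L.fderiv_pi_H]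
    exact (isLittleO_pi.2 hHc).prod_left ((isLittleO_pi.2 hHu).prod_left (isLittleO_pi.2 hHv))
  obtain ⟨z, hz_zero, hz, hz_sub⟩ := exists_tangentPair_sub_isLittleO
    (L.contDiff_pi_H.contDiffAt.of_le ENat.LEInfty.out) L.range_fderiv_pi_H hg hw small
  have pair_close : (fun s => (u s, v s) - (z s).2) =o[l] g :=
    (isLittleO_prod_left.1 hz_sub).2.symm
  have symp_lipschitz := ((contDiff_stdSymp n (m := 1)).contDiffAt.hasStrictFDerivAt
    one_ne_zero).isBigO_sub.comp_tendsto (hw.snd_nhds.prodMk_nhds hz.snd_nhds)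
  have symp_zero : ∀ᶠ s in l, stdSymp n (z s).2.1 (z s).2.2 = 0 := by
    filter_upwards [hz_zero, hz.eventually L.eventually_stdSymp_eq_zero] with s hs hs' using hs' hs
  refine (symp_lipschitz.trans_isLittleO pair_close).congr' ?_ .rfl
  filter_upwards [symp_zero] with s hs
  simp [hs]

theorem stdSymp_pullback_isLittleO {ι P : Type*} [NormedAddCommGroup P] [NormedSpace ℝ P]
    {M : P → Fin (2 * n) → ℝ} (hM : ContDiff ℝ 1 M) {l : Filter ι} {g : ι → ℝ}
    (hg : Tendsto g l (𝓝 0)) {c : ι → P} {a ξ η : P} (hc : Tendsto c l (𝓝 a)) (hMa : M a = 0)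
    (hHc : ∀ i, (fun s => L.H i (M (c s))) =o[l] g)
    (hHξ : ∀ i, (fun s => fderiv ℝ (fun p => L.H i (M p)) (c s) ξ) =o[l] g)
    (hHη : ∀ i, (fun s => fderiv ℝ (fun p => L.H i (M p)) (c s) η) =o[l] g) :
    (fun s => stdSymp n (fderiv ℝ M (c s) ξ) (fderiv ℝ M (c s) η)) =o[l] g := by
  have hMc : Tendsto (fun s => M (c s)) l (𝓝 0) := (hM.continuous.tendsto' a 0 hMa).comp hc
  have fderiv_tendsto (ζ : P) :
      Tendsto (fun s => fderiv ℝ M (c s) ζ) l (𝓝 (fderiv ℝ M a ζ)) :=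
    (((hM.continuous_fderiv one_ne_zero).clm_apply continuous_const).tendsto a).comp hc
  have chain (i : Fin n) (p ζ : P) :
      fderiv ℝ (fun p => L.H i (M p)) p ζ = fderiv ℝ (L.H i) (M p) (fderiv ℝ M p ζ) :=
    congrArg (· ζ) <| fderiv_fun_comp p ((L.smooth i).differentiable (by simp) _)
      (hM.differentiable one_ne_zero p)
  simp only [chain] at hHξ hHη
  exact L.stdSymp_isLittleO hg hMc (fderiv_tendsto ξ) (fderiv_tendsto η) hHc hHξ hHη

end LagrangianGerm

section GeneratingFunction

variable {n : ℕ}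

/-- The index of the coordinate `pᵢ` in the order `(p₁, q₁, …, pₙ, qₙ)`, with `i` counted from
`0`. -/
def momentumIndex (i : Fin n) : Fin (2 * n) := ⟨2 * i, by lia⟩

/-- The index of the coordinate `qᵢ` in the order `(p₁, q₁, …, pₙ, qₙ)`, with `i` counted from
`0`. -/
def positionIndex (i : Fin n) : Fin (2 * n) := ⟨2 * i + 1, by lia⟩

theorem positionIndex_injective : Function.Injective (positionIndex (n := n)) := by
  intro i j hij
  simpa [positionIndex, Fin.ext_iff] using hij

theorem momentumIndex_ne_positionIndex (i j : Fin n) : momentumIndex i ≠ positionIndex j := by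
  simp only [momentumIndex, positionIndex, ne_eq, Fin.mk.injEq]
  lia

/-- The projection `(p, q) ↦ p`. -/
def momentum : (Fin (2 * n) → ℝ) →L[ℝ] Fin n → ℝ :=
  .pi fun i => .proj (momentumIndex i)

/-- The projection `(p, q) ↦ q`. -/
def position : (Fin (2 * n) → ℝ) →L[ℝ] Fin n → ℝ :=
  .pi fun i => .proj (positionIndex i)

theorem stdSymp_eq_sum (u v : Fin (2 * n) → ℝ) :
    stdSymp n u v = ∑ i, (momentum u i * position v i - position u i * momentum v i) :=
  rfl

theorem momentum_single_positionIndex (i : Fin n) :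
    momentum (Pi.single (positionIndex i) 1) = 0 := by
  ext j
  exact Pi.single_eq_of_ne (momentumIndex_ne_positionIndex j i) 1

theorem position_single_positionIndex (i : Fin n) :
    position (Pi.single (positionIndex i) 1) = Pi.single i 1 := by
  ext j
  simp [position, Pi.single_apply, positionIndex_injective.eq_iff]

theorem stdSymp_eq_zero_of_position_eq {B : (Fin n → ℝ) →L[ℝ] (Fin n → ℝ) →L[ℝ] ℝ}
    (hB : ∀ x y, B x y = B y x) {u v : Fin (2 * n) → ℝ}
    (hu : ∀ i, position u i = B (momentum u) (Pi.single i 1))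
    (hv : ∀ i, position v i = B (momentum v) (Pi.single i 1)) : stdSymp n u v = 0 := by
  have B_apply (x y : Fin n → ℝ) : ∑ i, y i * B x (Pi.single i 1) = B x y :=
    (linearMap_pi_apply_eq_sum_mul (B x : (Fin n → ℝ) →ₗ[ℝ] ℝ) y).symm
  calc stdSymp n u v
      = B (momentum v) (momentum u) - B (momentum u) (momentum v) := by
        simp only [stdSymp_eq_sum, hu, hv, Finset.sum_sub_distrib, mul_comm (B _ _), B_apply]
    _ = 0 := sub_eq_zero.2 (hB _ _)

variable {S : (Fin n → ℝ) → ℝ}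

theorem hasFDerivAt_position_sub_partialDeriv (hS : ContDiff ℝ 2 S) (i : Fin n)
    (x : Fin (2 * n) → ℝ) :
    HasFDerivAt (fun x => position x i - fderiv ℝ S (momentum x) (Pi.single i 1))
      ((ContinuousLinearMap.proj i).comp position
        - ((fderiv ℝ (fderiv ℝ S) (momentum x)).flip (Pi.single i 1)).comp momentum) x := by
  have hdS : HasFDerivAt (fderiv ℝ S) _ (momentum x) :=
    ((hS.fderiv_right (m := 1) le_rfl).differentiable one_ne_zero _).hasFDerivAt
  have partial_deriv := (hdS.clm_apply (hasFDerivAt_const (Pi.single i 1) _)).comp x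
    momentum.hasFDerivAt
  refine (((ContinuousLinearMap.proj i).comp position).hasFDerivAt.sub
    partial_deriv).congr_fderiv ?_
  ext
  simp

theorem linearIndependent_proj_comp_position_sub
    (A : Fin n → (Fin n → ℝ) →L[ℝ] ℝ) :
    LinearIndependent ℝ fun i =>
      (ContinuousLinearMap.proj i : (Fin n → ℝ) →L[ℝ] ℝ).comp position - (A i).comp momentum := by
  rw [Fintype.linearIndependent_iff]
  intro g hg j
  simpa [momentum_single_positionIndex, position_single_positionIndex, Pi.single_apply] using
    DFunLike.congr_fun hg (Pi.single (positionIndex j) 1)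

/-- The germ of the Lagrangian submanifold `q = ∂S/∂p` with generating function `S`. -/
def LagrangianGerm.ofGeneratingFunction (S : (Fin n → ℝ) → ℝ) (hS : ContDiff ℝ ∞ S)
    (hS₀ : fderiv ℝ S 0 = 0) : LagrangianGerm n where
  H i x := position x i - fderiv ℝ S (momentum x) (Pi.single i 1)
  smooth i :=
    ((ContinuousLinearMap.proj i).comp position).contDiff.sub <|
      ((hS.fderiv_right (by simp)).comp momentum.contDiff).clm_apply contDiff_const
  zero_at_zero i := by simp [hS₀]
  lagrangian := by
    refine ⟨Set.univ, isOpen_univ, Set.mem_univ 0, fun x _ _ => ?_⟩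
    have hS₂ : ContDiff ℝ 2 S := hS.of_le ENat.LEInfty.out
    have hessian_symm : IsSymmSndFDerivAt ℝ S (momentum x) :=
      hS₂.contDiffAt.isSymmSndFDerivAt (by simp)
    simp only [(hasFDerivAt_position_sub_partialDeriv hS₂ _ x).fderiv]
    refine ⟨linearIndependent_proj_comp_position_sub _, fun u v hu hv => ?_⟩
    exact stdSymp_eq_zero_of_position_eq hessian_symm
      (fun i => sub_eq_zero.1 (hu i)) fun i => sub_eq_zero.1 (hv i)

end GeneratingFunction

section VanishOrder

variable {h : ℝ → ℝ} {m : ℕ}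

theorem natCast_lt_vanishOrder_iff :
    m < vanishOrder h ↔ ∀ k, 1 ≤ k → k ≤ m → iteratedDeriv k h 0 = 0 := by
  rw [← ENat.add_one_le_iff (ENat.natCast_ne_top m), vanishOrder, le_sInf_iff]
  constructor
  · intro hm k hk hkm
    by_contra hne
    exact absurd (hm k ⟨k, rfl, hk, hne⟩) (by norm_cast; lia)
  · rintro hm _ ⟨k, rfl, hk, hne⟩
    norm_cast
    by_contra! hlt
    exact hne (hm k hk (Nat.lt_succ_iff.1 hlt))

theorem natCast_lt_vanishOrder_iff_isLittleO (hh : ContDiff ℝ m h) (h₀ : h 0 = 0) :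
    m < vanishOrder h ↔ h =o[𝓝 0] fun t : ℝ => t ^ m := by
  rw [natCast_lt_vanishOrder_iff, isLittleO_pow_iff_iteratedDeriv_eq_zero hh]
  refine ⟨fun hm k hkm => ?_, fun hm k _ hkm => hm k hkm⟩
  rcases k.eq_zero_or_pos with rfl | hk
  · rwa [iteratedDeriv_zero]
  · exact hm k hk hkm

end VanishOrder

section E6

/-- The smooth surface `(x, y) ↦ (x, y³/3 + (b/2) x y², y, 0, …, 0)`, which contains the curve
`E₆³` as the image of the planar curve `t ↦ (t⁴, t³)`. -/
def e6Surface (n : ℕ) (b : ℝ) (z : ℝ × ℝ) (j : Fin (2 * n)) : ℝ :=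
  if (j : ℕ) = 0 then z.1
  else if (j : ℕ) = 1 then (1 / 3) * z.2 ^ 3 + (b / 2) * (z.1 * z.2 ^ 2)
  else if (j : ℕ) = 2 then z.2
  else 0

variable {n : ℕ} {b : ℝ}

theorem contDiff_e6Surface {m : WithTop ℕ∞} : ContDiff ℝ m (e6Surface n b) := by
  refine contDiff_pi.2 fun j => ?_
  unfold e6Surface
  split_ifs <;> fun_prop

theorem fderiv_e6Surface_apply (z v : ℝ × ℝ) (j : Fin (2 * n)) :
    fderiv ℝ (e6Surface n b) z v j =
      if (j : ℕ) = 0 then v.1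
      else if (j : ℕ) = 1 then z.2 ^ 2 * v.2 + (b / 2) * (v.1 * z.2 ^ 2 + 2 * z.1 * z.2 * v.2)
      else if (j : ℕ) = 2 then v.2
      else 0 := by
  have hx : HasFDerivAt (fun z : ℝ × ℝ => z.1) _ z := hasFDerivAt_fst (𝕜 := ℝ)
  have hy : HasFDerivAt (fun z : ℝ × ℝ => z.2) _ z := hasFDerivAt_snd (𝕜 := ℝ)
  have coordinate := hasFDerivAt_pi'.1
    ((contDiff_e6Surface (b := b)).differentiable one_ne_zero z).hasFDerivAt j
  change (ContinuousLinearMap.proj j).comp (fderiv ℝ (e6Surface n b) z) v = _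
  rw [← coordinate.fderiv]
  unfold e6Surface
  split_ifs
  · rw [hx.fderiv]; rfl
  · rw [((hy.pow 3).const_mul (1 / 3) |>.fun_add <|
      (hx.fun_mul (hy.pow 2)).const_mul (b / 2)).fderiv]
    simp only [one_div, Nat.add_one_sub_one, nsmul_eq_mul, Nat.cast_ofNat, pow_one, smul_add,
      add_apply, smul_apply, ContinuousLinearMap.coe_snd', smul_eq_mul,
      ContinuousLinearMap.coe_fst']
    ring
  · rw [hy.fderiv]; rfl
  · simp

theorem stdSymp_fderiv_e6Surface (hn : 0 < n) (y : ℝ) :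
    stdSymp n (fderiv ℝ (e6Surface n b) (0, y) (1, 0)) (fderiv ℝ (e6Surface n b) (0, y) (0, 1))
      = y ^ 2 := by
  have position_zero (v : ℝ × ℝ) (i : Fin n) (hi : i ≠ ⟨0, hn⟩) :
      position (fderiv ℝ (e6Surface n b) (0, y) v) i = 0 := by
    simp only [ne_eq, Fin.ext_iff] at hi
    simp [position, positionIndex, fderiv_e6Surface_apply, hi]
  rw [stdSymp_eq_sum, Finset.sum_eq_single_of_mem ⟨0, hn⟩ (Finset.mem_univ _)
    fun i _ hi => by simp [position_zero _ i hi]]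
  simp [position, momentum, positionIndex, momentumIndex, fderiv_e6Surface_apply]

theorem tOrd_e6Surface_comp_cusp_le (hn : 0 < n) (L : LagrangianGerm n) :
    tOrd (fun t => e6Surface n b (t ^ 4, t ^ 3)) L ≤ 10 := by
  by_contra! hlt
  have surface_zero : e6Surface n b 0 = 0 := by
    ext j
    simp [e6Surface]
  have smooth (i : Fin n) : ContDiff ℝ ∞ fun z => L.H i (e6Surface n b z) :=
    (L.smooth i).comp contDiff_e6Surface
  have curve_small (i : Fin n) :
      (fun t : ℝ => L.H i (e6Surface n b (t ^ 4, t ^ 3))) =o[𝓝 0] fun t => t ^ 10 := by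
    refine (natCast_lt_vanishOrder_iff_isLittleO (m := 10) ?_ ?_).1 (hlt.trans_le (iInf_le _ i))
    · exact ((smooth i).of_le ENat.LEInfty.out).comp (by fun_prop)
    · simpa [← Prod.zero_eq_mk, surface_zero] using L.zero_at_zero i
  have jets_small (i : Fin n) := isLittleO_of_comp_cusp_isLittleO
    ((smooth i).of_le ENat.LEInfty.out) (curve_small i)
  have sq_tendsto : Tendsto (fun y : ℝ => y ^ 2) (𝓝 0) (𝓝 0) :=
    (continuous_pow 2).tendsto' 0 0 (by simp)
  have symp_small := L.stdSymp_pullback_isLittleO (contDiff_e6Surface (n := n) (b := b)) sq_tendsto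
    ((Continuous.prodMk_right (0 : ℝ)).tendsto 0) surface_zero
    (fun i => (jets_small i).1.trans (isLittleO_pow_pow (by norm_num)))
    (fun i => (jets_small i).2.1) (fun i => (jets_small i).2.2)
  simp only [stdSymp_fderiv_e6Surface hn] at symp_small
  exact not_pow_isLittleO_pow_self 2 symp_small

/-- The function `p₁p₂³/3`. Its differential agrees on `E₆³` with the positions `q₁ = t⁹/3` and
`q₂ = 0` up to terms of order `t¹⁰`. -/
def e6GeneratingFunction (hn : 2 ≤ n) (p : Fin n → ℝ) : ℝ :=
  (1 / 3) * (p ⟨0, by lia⟩ * p ⟨1, by lia⟩ ^ 3)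

theorem contDiff_e6GeneratingFunction {m : WithTop ℕ∞} (hn : 2 ≤ n) :
    ContDiff ℝ m (e6GeneratingFunction hn) := by
  unfold e6GeneratingFunction
  fun_prop

theorem fderiv_e6GeneratingFunction_apply (hn : 2 ≤ n) (p v : Fin n → ℝ) :
    fderiv ℝ (e6GeneratingFunction hn) p v =
      (1 / 3) * p ⟨1, by lia⟩ ^ 3 * v ⟨0, by lia⟩
        + p ⟨0, by lia⟩ * p ⟨1, by lia⟩ ^ 2 * v ⟨1, by lia⟩ := by
  have hp (i : Fin n) : HasFDerivAt (fun p : Fin n → ℝ => p i) _ p := hasFDerivAt_apply (𝕜 := ℝ) i p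
  have hasFDerivAt_product : HasFDerivAt (e6GeneratingFunction hn) _ p :=
    ((hp _).fun_mul ((hp _).pow 3)).const_mul (1 / 3)
  rw [hasFDerivAt_product.fderiv]
  simp only [one_div, Nat.add_one_sub_one, nsmul_eq_mul, Nat.cast_ofNat, smul_add, add_apply,
    smul_apply, ContinuousLinearMap.proj_apply, smul_eq_mul]
  ring

/-- The Lagrangian germ `q₁ = p₂³/3`, `q₂ = p₁p₂²`, `q₃ = ⋯ = qₙ = 0`, whose tangency order with
`E₆³` is maximal. -/
def e6LagrangianGerm (hn : 2 ≤ n) : LagrangianGerm n :=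
  .ofGeneratingFunction (e6GeneratingFunction hn) (contDiff_e6GeneratingFunction hn) <| by
    ext v
    simp [fderiv_e6GeneratingFunction_apply]

theorem e6LagrangianGerm_H_comp_cusp (hn : 2 ≤ n) (i : Fin n) (t : ℝ) :
    (e6LagrangianGerm hn).H i (e6Surface n b (t ^ 4, t ^ 3)) =
      (if (i : ℕ) = 0 then b / 2 else if (i : ℕ) = 1 then -1 else 0) * t ^ 10 := by
  set x := e6Surface n b (t ^ 4, t ^ 3) with hx
  have momentum_zero : momentum x ⟨0, by lia⟩ = t ^ 4 := by
    simp [hx, momentum, momentumIndex, e6Surface]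
  have momentum_one : momentum x ⟨1, by lia⟩ = t ^ 3 := by
    simp [hx, momentum, momentumIndex, e6Surface]
  have position_eq :
      position x i = if (i : ℕ) = 0 then (1 / 3) * t ^ 9 + (b / 2) * t ^ 10 else 0 := by
    simp only [hx, position, positionIndex, e6Surface, ContinuousLinearMap.pi_apply,
      ContinuousLinearMap.proj_apply]
    split_ifs <;> first | lia | ring
  simp only [e6LagrangianGerm, LagrangianGerm.ofGeneratingFunction,
    fderiv_e6GeneratingFunction_apply, momentum_zero, momentum_one, position_eq, Pi.single_apply,
    Fin.ext_iff]
  split_ifs <;> first | lia | ring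

theorem le_tOrd_e6LagrangianGerm (hn : 2 ≤ n) :
    10 ≤ tOrd (fun t => e6Surface n b (t ^ 4, t ^ 3)) (e6LagrangianGerm hn) := by
  refine le_iInf fun i => ?_
  simp only [e6LagrangianGerm_H_comp_cusp]
  refine Order.add_one_le_of_lt (x := (9 : ℕ∞)) ?_
  exact (natCast_lt_vanishOrder_iff_isLittleO (m := 9) (by fun_prop) (by simp)).2
    ((isLittleO_pow_pow (by norm_num)).const_mul_left _)

end E6

/-- The Lagrangian tangency order of the class `E₆³` of the planar singularity `E₆`. -/
theorem E6_3_lagrangian_tangency_order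
    (n : ℕ) (hn : 2 ≤ n) (b : ℝ)
    (f : ℝ → Fin (2 * n) → ℝ)
    (hf : f = fun (t : ℝ) (j : Fin (2 * n)) => if (j : ℕ) = 0 then t ^ 4 else if (j : ℕ) = 1 then (1 / 3) * t ^ 9 + (b / 2) * t ^ 10 else if (j : ℕ) = 2 then t ^ 3 else (0 : ℝ)) :
    Lt1 f = 10 := by
  have f_eq_surface_cusp : f = fun t => e6Surface n b (t ^ 4, t ^ 3) := by
    subst hf
    ext t j
    simp only [e6Surface]
    ring_nf
  rw [f_eq_surface_cusp]
  apply le_antisymm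
  · exact iSup_le fun L => tOrd_e6Surface_comp_cusp_le (by lia) L
  · exact (le_tOrd_e6LagrangianGerm hn).trans (le_iSup _ _)

end
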